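/- Suppose Σ_{i∈U} p_i ≥ αk for some α > 1. Then for every item i ∈ U, the consideration probability of i is lower bounded as p_i ≥ Pr_{PL+C}(R_{i≤k}) · [1 - (α e^{1-α})^k], where R_{i≤k} is the set of length-k rankings containing i. -/

import Mathlib

open scoped Classical
open Finset

noncomputable section

/-- Weight of a consideration set `C`: each item in `C` is considered (prob `p i`),
each item outside is not considered (prob `1 - p j`). -/
def considerWeight (n : ℕ) (p : Fin n → ℝ) (C : Finset (Fin n)) : ℝ :=
  (∏ i ∈ C, p i) * ∏ j ∈ Cᶜ, (1 - p j)

/-- Normalizing constant `z_{k,p}`: total weight of consideration sets of size at least `k`. -/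
def zConst (n k : ℕ) (p : Fin n → ℝ) : ℝ :=
  ∑ C ∈ Finset.univ.filter (fun C : Finset (Fin n) => k ≤ C.card), considerWeight n p C

/-- Probability of consideration set `C` (conditioned on `|C| ≥ k`). -/
def prC (n k : ℕ) (p : Fin n → ℝ) (C : Finset (Fin n)) : ℝ :=
  if k ≤ C.card then considerWeight n p C / zConst n k p else 0

/-- Plackett–Luce probability of the length-`k` ranking `r` given consideration set `C`. -/
def prPL (n k : ℕ) (u : Fin n → ℝ) (r : Fin k ↪ Fin n) (C : Finset (Fin n)) : ℝ :=
  if ∀ t : Fin k, r t ∈ C then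
    ∏ t : Fin k, Real.exp (u (r t)) /
      ∑ j ∈ C \ (Finset.Iio t).image r, Real.exp (u j)
  else 0

/-- Plackett–Luce-with-consideration (PL+C) probability of the ranking `r`. -/
def prPLC (n k : ℕ) (u p : Fin n → ℝ) (r : Fin k ↪ Fin n) : ℝ :=
  ∑ C : Finset (Fin n), prC n k p C * prPL n k u r C

/-- PL probability of a set of rankings. -/
def prPLset (n k : ℕ) (u : Fin n → ℝ) (R : Finset (Fin k ↪ Fin n)) (C : Finset (Fin n)) : ℝ :=
  ∑ r ∈ R, prPL n k u r C

/-- PL+C probability of a set of rankings. -/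
def prPLCset (n k : ℕ) (u p : Fin n → ℝ) (R : Finset (Fin k ↪ Fin n)) : ℝ :=
  ∑ r ∈ R, prPLC n k u p r

/-- `R_{i≤ℓ}`: the set of length-`k` rankings with item `i` among the top `ℓ` positions. -/
def topSet (n k : ℕ) (i : Fin n) (ℓ : ℕ) : Finset (Fin k ↪ Fin n) :=
  Finset.univ.filter (fun r => ∃ t : Fin k, (t : ℕ) < ℓ ∧ r t = i)

/-!
Let `z` be the probability that at least `k` items are considered. Conditioning on this event
multiplies the weight of a consideration set by at most `1 / z`, and a ranking containing `i` can
only arise from a consideration set containing `i`, so the probability of ranking `i` is at most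
`p i / z`. The number of considered items is a sum of independent Bernoulli variables with mean
`μ ≥ α k`; the Chernoff bound with generating-function parameter `α⁻¹` gives
`1 - z ≤ α ^ k * exp ((α⁻¹ - 1) * μ) ≤ (α * exp (1 - α)) ^ k`.
-/

section ExponentialMarkov

variable {ι R : Type*} [CommSemiring R] [PartialOrder R] [IsOrderedRing R]

theorem pow_mul_sum_filter_lt_le_sum_mul_pow (s : Finset ι) (f : ι → ℕ) {w : ι → R}
    (hw : ∀ i ∈ s, 0 ≤ w i) {x : R} (hx₀ : 0 ≤ x) (hx₁ : x ≤ 1) (k : ℕ) :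
    x ^ k * ∑ i ∈ s with f i < k, w i ≤ ∑ i ∈ s, w i * x ^ f i := by
  calc x ^ k * ∑ i ∈ s with f i < k, w i
      = ∑ i ∈ s with f i < k, w i * x ^ k := by rw [mul_comm, sum_mul]
    _ ≤ ∑ i ∈ s with f i < k, w i * x ^ f i := by
        refine sum_le_sum fun i hi ↦ ?_
        obtain ⟨his, hik⟩ := mem_filter.1 hi
        exact mul_le_mul_of_nonneg_left (pow_le_pow_of_le_one hx₀ hx₁ hik.le) (hw i his)
    _ ≤ ∑ i ∈ s, w i * x ^ f i :=
        sum_le_sum_of_subset_of_nonneg (filter_subset _ s) fun i hi _ ↦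
          mul_nonneg (hw i hi) (pow_nonneg hx₀ _)

end ExponentialMarkov

section ConsiderationSets

variable {n k : ℕ} {p : Fin n → ℝ}

theorem considerWeight_nonneg (hp₀ : 0 ≤ p) (hp₁ : p ≤ 1) (C : Finset (Fin n)) :
    0 ≤ considerWeight n p C :=
  mul_nonneg (prod_nonneg fun i _ ↦ hp₀ i) (prod_nonneg fun i _ ↦ sub_nonneg.2 (hp₁ i))

-- Items are considered independently, so this joint generating function factors over them.
theorem sum_considerWeight_mul_prod_mul_prod_compl (p f g : Fin n → ℝ) :
    ∑ C, considerWeight n p C * ((∏ i ∈ C, f i) * ∏ i ∈ Cᶜ, g i) =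
      ∏ i, (p i * f i + (1 - p i) * g i) := by
  simp only [Fintype.prod_add, considerWeight, prod_mul_distrib, mul_mul_mul_comm]

theorem sum_considerWeight (p : Fin n → ℝ) : ∑ C, considerWeight n p C = 1 := by
  simpa using sum_considerWeight_mul_prod_mul_prod_compl p 1 1

theorem sum_considerWeight_filter_mem (p : Fin n → ℝ) (i : Fin n) :
    ∑ C with i ∈ C, considerWeight n p C = p i := by
  have indicator (C : Finset (Fin n)) :
      ∏ j ∈ Cᶜ, (if j ≠ i then 1 else 0 : ℝ) = if i ∈ C then 1 else 0 := by
    rw [prod_ite_zero, prod_const_one]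
    congr 1
    simp only [mem_compl, eq_iff_iff]
    grind
  calc ∑ C with i ∈ C, considerWeight n p C
      = ∏ j, (p j * 1 + (1 - p j) * if j ≠ i then 1 else 0) := by
        rw [← sum_considerWeight_mul_prod_mul_prod_compl]
        simp only [indicator, prod_const_one, mul_ite, mul_one, mul_zero, sum_filter]
    _ = p i := by
        rw [prod_eq_single i (by simp +contextual) (by simp)]
        simp

theorem sum_considerWeight_mul_pow_card_le_exp (hp₀ : 0 ≤ p) (hp₁ : p ≤ 1) {x : ℝ} (hx : 0 ≤ x) :
    ∑ C, considerWeight n p C * x ^ #C ≤ Real.exp ((x - 1) * ∑ i, p i) := by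
  calc ∑ C, considerWeight n p C * x ^ #C
      = ∏ i, (p i * x + (1 - p i) * 1) := by
        rw [← sum_considerWeight_mul_prod_mul_prod_compl]
        simp only [prod_const, one_pow, mul_one]
    _ ≤ ∏ i, Real.exp ((x - 1) * p i) := by
        refine prod_le_prod (fun i _ ↦ ?_) fun i _ ↦ ?_
        · have hpx : 0 ≤ p i * x := mul_nonneg (hp₀ i) hx
          have hp₁i : p i ≤ 1 := hp₁ i
          linarith
        · linarith [Real.add_one_le_exp ((x - 1) * p i)]
    _ = Real.exp ((x - 1) * ∑ i, p i) := by rw [← Real.exp_sum, mul_sum]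

theorem sum_considerWeight_filter_card_lt_le (hp₀ : 0 ≤ p) (hp₁ : p ≤ 1) {α : ℝ} (hα : 1 ≤ α)
    (hsum : α * k ≤ ∑ i, p i) :
    ∑ C with #C < k, considerWeight n p C ≤ (α * Real.exp (1 - α)) ^ k := by
  have hα' : α⁻¹ ≤ 1 := inv_le_one_of_one_le₀ hα
  have markov : α⁻¹ ^ k * ∑ C with #C < k, considerWeight n p C ≤ Real.exp (k * (1 - α)) :=
    calc α⁻¹ ^ k * ∑ C with #C < k, considerWeight n p C
        ≤ ∑ C, considerWeight n p C * α⁻¹ ^ #C :=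
          pow_mul_sum_filter_lt_le_sum_mul_pow univ card
            (fun C _ ↦ considerWeight_nonneg hp₀ hp₁ C) (by positivity) hα' k
      _ ≤ Real.exp ((α⁻¹ - 1) * ∑ i, p i) :=
          sum_considerWeight_mul_pow_card_le_exp hp₀ hp₁ (by positivity)
      _ ≤ Real.exp ((α⁻¹ - 1) * (α * k)) :=
          Real.exp_le_exp.2 (mul_le_mul_of_nonpos_left hsum (sub_nonpos.2 hα'))
      _ = Real.exp (k * (1 - α)) := by
          congr 1
          field_simp
  rwa [mul_pow, ← Real.exp_nat_mul, ← inv_mul_le_iff₀ (by positivity), ← inv_pow]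

theorem one_sub_le_zConst (hp₀ : 0 ≤ p) (hp₁ : p ≤ 1) {α : ℝ} (hα : 1 ≤ α)
    (hsum : α * k ≤ ∑ i, p i) :
    1 - (α * Real.exp (1 - α)) ^ k ≤ zConst n k p := by
  have total_split := sum_filter_add_sum_filter_not univ (fun C : Finset (Fin n) ↦ k ≤ #C)
    (considerWeight n p)
  simp only [not_le, sum_considerWeight] at total_split
  rw [zConst]
  linarith [sum_considerWeight_filter_card_lt_le hp₀ hp₁ hα hsum]

theorem zConst_nonneg (hp₀ : 0 ≤ p) (hp₁ : p ≤ 1) : 0 ≤ zConst n k p :=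
  sum_nonneg fun C _ ↦ considerWeight_nonneg hp₀ hp₁ C

theorem prC_nonneg (hp₀ : 0 ≤ p) (hp₁ : p ≤ 1) (C : Finset (Fin n)) : 0 ≤ prC n k p C := by
  rw [prC]
  split_ifs
  · exact div_nonneg (considerWeight_nonneg hp₀ hp₁ C) (zConst_nonneg hp₀ hp₁)
  · rfl

theorem prC_mul_zConst_le_considerWeight (hp₀ : 0 ≤ p) (hp₁ : p ≤ 1) (C : Finset (Fin n)) :
    prC n k p C * zConst n k p ≤ considerWeight n p C := by
  have hC := considerWeight_nonneg hp₀ hp₁ C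
  rw [prC]
  split_ifs
  · exact mul_le_of_le_div₀ hC (zConst_nonneg hp₀ hp₁) le_rfl
  · simpa using hC

end ConsiderationSets

section LuceChoice

variable {ι : Type*} [DecidableEq ι]

/-- The probability that the item `a` is chosen from the set `C` in Luce's choice model with
utilities `u` (the multinomial logit model), taken to be `0` when `a` is not available.
A Plackett–Luce ranking is drawn by successive Luce choices without replacement. -/
def luceChoice (u : ι → ℝ) (C : Finset ι) (a : ι) : ℝ :=
  if a ∈ C then Real.exp (u a) / ∑ j ∈ C, Real.exp (u j) else 0

theorem luceChoice_nonneg (u : ι → ℝ) (C : Finset ι) (a : ι) : 0 ≤ luceChoice u C a := by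
  unfold luceChoice
  positivity

-- The sum is `0` rather than `1` when `C` is empty.
theorem sum_luceChoice_le_one [Fintype ι] (u : ι → ℝ) (C : Finset ι) :
    ∑ a, luceChoice u C a ≤ 1 := by
  simp only [luceChoice, sum_ite_mem, univ_inter, ← sum_div]
  exact div_self_le_one _

end LuceChoice

theorem sum_embedding_succ_le_sum_sum {ι M : Type*} [Fintype ι] [AddCommMonoid M] [PartialOrder M]
    [IsOrderedAddMonoid M] {k : ℕ} {f : ι → (Fin k ↪ ι) → M} (hf : ∀ a r, 0 ≤ f a r) :
    ∑ r : Fin (k + 1) ↪ ι, f (r 0) (Fin.Embedding.tail r) ≤ ∑ a, ∑ r, f a r := by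
  have head_tail_injective :
      Function.Injective fun r : Fin (k + 1) ↪ ι ↦ (r 0, Fin.Embedding.tail r) := by
    intro r s h
    obtain ⟨head_eq, tail_eq⟩ := Prod.ext_iff.1 h
    ext t
    exact t.cases head_eq fun t ↦ DFunLike.congr_fun tail_eq t
  calc ∑ r : Fin (k + 1) ↪ ι, f (r 0) (Fin.Embedding.tail r)
      = ∑ x ∈ univ.map ⟨_, head_tail_injective⟩, f x.1 x.2 := by
        simp only [sum_map, Function.Embedding.coeFn_mk]
    _ ≤ ∑ x : ι × (Fin k ↪ ι), f x.1 x.2 := sum_le_univ_sum_of_nonneg fun x ↦ hf x.1 x.2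
    _ = ∑ a, ∑ r, f a r := Fintype.sum_prod_type' f

section PlackettLuce

variable {n k : ℕ}

theorem prPL_nonneg (u : Fin n → ℝ) (r : Fin k ↪ Fin n) (C : Finset (Fin n)) :
    0 ≤ prPL n k u r C := by
  unfold prPL
  positivity

theorem prPL_succ (u : Fin n → ℝ) (r : Fin (k + 1) ↪ Fin n) (C : Finset (Fin n)) :
    prPL n (k + 1) u r C =
      luceChoice u C (r 0) * prPL n k u (Fin.Embedding.tail r) (C.erase (r 0)) := by
  have available_iff : (∀ t, r t ∈ C) ↔
      r 0 ∈ C ∧ ∀ t, Fin.Embedding.tail r t ∈ C.erase (r 0) := by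
    simp [Fin.forall_fin_succ, Fin.tail]
  have remaining (t : Fin k) : C \ (Iio t.succ).image r =
      C.erase (r 0) \ (Iio t).image (Fin.Embedding.tail r) := by
    ext a
    simp [Fin.exists_fin_succ, Fin.tail, eq_comm, and_assoc, and_left_comm]
  have Iio_zero : Iio (0 : Fin (k + 1)) = ∅ := Iio_bot
  simp only [prPL, luceChoice, available_iff, Fin.prod_univ_succ, remaining, Iio_zero,
    image_empty, sdiff_empty, ite_zero_mul_ite_zero]
  rfl

theorem sum_prPL_le_one (u : Fin n → ℝ) (C : Finset (Fin n)) : ∑ r, prPL n k u r C ≤ 1 := by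
  induction k generalizing C with
  | zero => simp [prPL]
  | succ k ih =>
    calc ∑ r, prPL n (k + 1) u r C
        = ∑ r : Fin (k + 1) ↪ Fin n,
            luceChoice u C (r 0) * prPL n k u (Fin.Embedding.tail r) (C.erase (r 0)) := by
          simp only [prPL_succ]
      _ ≤ ∑ a, ∑ r, luceChoice u C a * prPL n k u r (C.erase a) :=
          sum_embedding_succ_le_sum_sum
            (f := fun a r ↦ luceChoice u C a * prPL n k u r (C.erase a))
            fun a r ↦ mul_nonneg (luceChoice_nonneg u C a) (prPL_nonneg u r _)
      _ ≤ ∑ a, luceChoice u C a := by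
          refine sum_le_sum fun a _ ↦ ?_
          rw [← mul_sum]
          exact mul_le_of_le_one_right (luceChoice_nonneg u C a) (ih _)
      _ ≤ 1 := sum_luceChoice_le_one u C

theorem prPLset_nonneg (u : Fin n → ℝ) (R : Finset (Fin k ↪ Fin n)) (C : Finset (Fin n)) :
    0 ≤ prPLset n k u R C :=
  sum_nonneg fun r _ ↦ prPL_nonneg u r C

theorem prPLset_le_one (u : Fin n → ℝ) (R : Finset (Fin k ↪ Fin n)) (C : Finset (Fin n)) :
    prPLset n k u R C ≤ 1 :=
  (sum_le_univ_sum_of_nonneg fun r ↦ prPL_nonneg u r C).trans (sum_prPL_le_one u C)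

theorem prPLset_eq_zero_of_notMem (u : Fin n → ℝ) {R : Finset (Fin k ↪ Fin n)} {i : Fin n}
    (hR : ∀ r ∈ R, ∃ t, r t = i) {C : Finset (Fin n)} (hi : i ∉ C) : prPLset n k u R C = 0 := by
  refine sum_eq_zero fun r hr ↦ if_neg fun hrC ↦ ?_
  obtain ⟨t, rfl⟩ := hR r hr
  exact hi (hrC t)

end PlackettLuce

section PlackettLuceConsideration

variable {n k : ℕ} {p : Fin n → ℝ}

theorem prPLCset_eq_sum_prC_mul_prPLset (u p : Fin n → ℝ) (R : Finset (Fin k ↪ Fin n)) :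
    prPLCset n k u p R = ∑ C, prC n k p C * prPLset n k u R C := by
  simp only [prPLCset, prPLC, prPLset, mul_sum]
  exact sum_comm

theorem prPLCset_nonneg (hp₀ : 0 ≤ p) (hp₁ : p ≤ 1) (u : Fin n → ℝ)
    (R : Finset (Fin k ↪ Fin n)) : 0 ≤ prPLCset n k u p R := by
  rw [prPLCset_eq_sum_prC_mul_prPLset]
  exact sum_nonneg fun C _ ↦ mul_nonneg (prC_nonneg hp₀ hp₁ C) (prPLset_nonneg u R C)

theorem prPLCset_mul_zConst_le (hp₀ : 0 ≤ p) (hp₁ : p ≤ 1) (u : Fin n → ℝ)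
    {R : Finset (Fin k ↪ Fin n)} {i : Fin n} (hR : ∀ r ∈ R, ∃ t, r t = i) :
    prPLCset n k u p R * zConst n k p ≤ p i := by
  calc prPLCset n k u p R * zConst n k p
      = ∑ C, prC n k p C * zConst n k p * prPLset n k u R C := by
        simp only [prPLCset_eq_sum_prC_mul_prPLset, sum_mul, mul_right_comm]
    _ ≤ ∑ C, considerWeight n p C * prPLset n k u R C :=
        sum_le_sum fun C _ ↦ mul_le_mul_of_nonneg_right
          (prC_mul_zConst_le_considerWeight hp₀ hp₁ C) (prPLset_nonneg u R C)
    _ = ∑ C with i ∈ C, considerWeight n p C * prPLset n k u R C :=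
        (sum_filter_of_ne fun C _ hC ↦ by_contra fun hi ↦
          hC (by rw [prPLset_eq_zero_of_notMem u hR hi, mul_zero])).symm
    _ ≤ ∑ C with i ∈ C, considerWeight n p C :=
        sum_le_sum fun C _ ↦
          mul_le_of_le_one_right (considerWeight_nonneg hp₀ hp₁ C) (prPLset_le_one u R C)
    _ = p i := sum_considerWeight_filter_mem p i

theorem exists_eq_of_mem_topSet {i : Fin n} {l : ℕ} {r : Fin k ↪ Fin n}
    (hr : r ∈ topSet n k i l) : ∃ t, r t = i := by
  obtain ⟨t, -, ht⟩ := (mem_filter.1 hr).2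
  exact ⟨t, ht⟩

end PlackettLuceConsideration

/-- initial lower bound on consideration probabilities:
`p_i ≥ Pr_{PL+C}(R_{i≤k}) · [1 - (α e^{1-α})^k]`. -/
theorem consideration_initial_LB (n k : ℕ) (u p : Fin n → ℝ) (α : ℝ) (i : Fin n)
    (hp : ∀ a, 0 < p a ∧ p a ≤ 1) (hk : 1 ≤ k) (hkn : k ≤ n)
    (hα : 1 < α) (hsum : α * k ≤ ∑ a, p a) :
    p i ≥ prPLCset n k u p (topSet n k i k) * (1 - (α * Real.exp (1 - α)) ^ k) := by
  have hp₀ : 0 ≤ p := fun a ↦ (hp a).1.le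
  have hp₁ : p ≤ 1 := fun a ↦ (hp a).2
  calc prPLCset n k u p (topSet n k i k) * (1 - (α * Real.exp (1 - α)) ^ k)
      ≤ prPLCset n k u p (topSet n k i k) * zConst n k p :=
        mul_le_mul_of_nonneg_left (one_sub_le_zConst hp₀ hp₁ hα.le hsum)
          (prPLCset_nonneg hp₀ hp₁ u _)
    _ ≤ p i := prPLCset_mul_zConst_le hp₀ hp₁ u fun _ ↦ exists_eq_of_mem_topSet
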